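/- arXiv:1909.04484 — 2 statements merged into one kernel-verified Lean document; each statement's English description precedes it below -/
import Mathlib

section
/- Assume F ∈ C¹(ℝ,ℝ) with F(0) = 0, F(x) > 0 for all x ≠ 0, and F′(x) = O(1/|log x|) as x → 0⁺. Then there exists ε₁* > 0 such that for every ε with 0 ≤ ε < ε₁* one has ψ^ε(β) < β for all β > 2; in particular β = 2 is the unique fixed point of ψ^ε on [2, ∞). -/
/-- The orbit of `1` under the β-map `T_β(x) = βx mod 1`: `t₀ = 1`,
`t_{n+1} = β t_n − ⌊β t_n⌋`. -/
noncomputable def betaOrbit (β : ℝ) : ℕ → ℝ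
  | 0 => 1
  | n + 1 => Int.fract (β * betaOrbit β n)

/-- `E(β) = (∑ t_n(β)²/(2βⁿ)) / (∑ t_n(β)/βⁿ)`, the expectation of the unique acim of
the β-map. -/
noncomputable def Ebeta (β : ℝ) : ℝ :=
  (∑' n : ℕ, (betaOrbit β n) ^ 2 / (2 * β ^ n)) / (∑' n : ℕ, betaOrbit β n / β ^ n)

/-- `ψ^ε(β) = 2 + ε F(1/E(β) − 2)`. -/
noncomputable def psi (ε : ℝ) (F : ℝ → ℝ) (β : ℝ) : ℝ :=
  2 + ε * F (1 / Ebeta β - 2)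

/-! Put `x(β) = 1/E(β) - 2`. Since `t_n ≤ 1`, the numerator of `E` lies between `1/2` and half of
the denominator, so `x(β) ≥ 0`, and `x(β)` is at most twice the excess of the denominator over `1`.
As `t_{n+1} ≤ (β - 2) βⁿ`, the first `m` terms of this excess contribute at most `m (β - 2) / 2`,
and the others at most `2⁻ᵐ`; hence `x(β) ≤ m (β - 2) + 2 · 2⁻ᵐ` for every `m`. Choosing `m`
logarithmic in `1 / x(β)` makes the last term at most `x(β) / 2` and gives
`x / (1 + log (2 / x)) ≤ 4 (β - 2)` at `x = x(β)`. By the mean value theorem, the hypothesis on `F'`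
makes `F(x)` at most a constant times `x / (1 + log (2 / x))` on `[0, 2]`, so
`F(x(β)) ≤ 4 K (β - 2)` for some `K > 0`, and `ε₁* = 1 / (4 K)` works. -/

open Set

section Orbit

variable {β : ℝ}

theorem betaOrbit_nonneg (β : ℝ) : ∀ n, 0 ≤ betaOrbit β n
  | 0 => zero_le_one
  | _ + 1 => Int.fract_nonneg _

theorem betaOrbit_le_one (β : ℝ) : ∀ n, betaOrbit β n ≤ 1
  | 0 => le_rfl
  | _ + 1 => (Int.fract_lt_one _).le

theorem betaOrbit_succ_le_mul (hβ : 0 ≤ β) (n : ℕ) :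
    betaOrbit β (n + 1) ≤ β * betaOrbit β n :=
  sub_le_self _ <| mod_cast Int.floor_nonneg.2 (mul_nonneg hβ (betaOrbit_nonneg β n))

theorem betaOrbit_succ_le_fract_mul_pow (hβ : 0 ≤ β) (n : ℕ) :
    betaOrbit β (n + 1) ≤ Int.fract β * β ^ n := by
  induction n with
  | zero => simp [betaOrbit]
  | succ n ih =>
    calc betaOrbit β (n + 1 + 1) ≤ β * betaOrbit β (n + 1) := betaOrbit_succ_le_mul hβ _
      _ ≤ β * (Int.fract β * β ^ n) := by gcongr
      _ = Int.fract β * β ^ (n + 1) := by ring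

theorem betaOrbit_natCast_succ (k n : ℕ) : betaOrbit k (n + 1) = 0 := by
  induction n with
  | zero => simp [betaOrbit]
  | succ n ih => rw [betaOrbit, ih, mul_zero, Int.fract_zero]

end Orbit

section Parry

variable {β : ℝ}

/-- The total mass `∫₀¹ h_β` of the unnormalised Parry density, the denominator of `E(β)`. -/
noncomputable def parryMass (β : ℝ) : ℝ :=
  ∑' n : ℕ, betaOrbit β n / β ^ n

/-- The first moment `∫₀¹ x h_β(x) dx` of the unnormalised Parry density, the numerator of
`E(β)`. -/
noncomputable def parryMoment (β : ℝ) : ℝ :=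
  ∑' n : ℕ, betaOrbit β n ^ 2 / (2 * β ^ n)

theorem Ebeta_eq_parryMoment_div_parryMass (β : ℝ) : Ebeta β = parryMoment β / parryMass β :=
  rfl

theorem betaOrbit_div_pow_nonneg (hβ : 0 ≤ β) (n : ℕ) : 0 ≤ betaOrbit β n / β ^ n :=
  div_nonneg (betaOrbit_nonneg β n) (pow_nonneg hβ n)

theorem betaOrbit_div_pow_le_inv_pow (hβ : 0 ≤ β) (n : ℕ) :
    betaOrbit β n / β ^ n ≤ β⁻¹ ^ n := by
  rw [inv_pow, ← one_div]
  exact div_le_div_of_nonneg_right (betaOrbit_le_one β n) (pow_nonneg hβ n)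

theorem betaOrbit_succ_div_pow_le (hβ : 0 < β) (n : ℕ) :
    betaOrbit β (n + 1) / β ^ (n + 1) ≤ Int.fract β / β := by
  rw [div_le_div_iff₀ (pow_pos hβ _) hβ, pow_succ, ← mul_assoc]
  exact mul_le_mul_of_nonneg_right (betaOrbit_succ_le_fract_mul_pow hβ.le n) hβ.le

theorem summable_betaOrbit_div_pow (hβ : 1 < β) : Summable fun n ↦ betaOrbit β n / β ^ n :=
  .of_nonneg_of_le (betaOrbit_div_pow_nonneg (by positivity))
    (betaOrbit_div_pow_le_inv_pow (by positivity))
    (summable_geometric_of_lt_one (by positivity) (inv_lt_one_of_one_lt₀ hβ))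

theorem tsum_betaOrbit_div_pow_nat_add_le (hβ : 1 < β) (m : ℕ) :
    ∑' n, betaOrbit β (n + m) / β ^ (n + m) ≤ (1 - β⁻¹)⁻¹ * β⁻¹ ^ m := by
  have geometric := (hasSum_geometric_of_lt_one (r := β⁻¹) (by positivity)
    (inv_lt_one_of_one_lt₀ hβ)).mul_right (β⁻¹ ^ m)
  refine (((summable_nat_add_iff m).2 (summable_betaOrbit_div_pow hβ)).tsum_le_tsum
    (fun n ↦ ?_) geometric.summable).trans_eq geometric.tsum_eq
  rw [← pow_add]
  exact betaOrbit_div_pow_le_inv_pow (by positivity) (n + m)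

theorem parryMass_le (hβ : 1 < β) (m : ℕ) :
    parryMass β ≤ 1 + m * (Int.fract β / β) + (1 - β⁻¹)⁻¹ * β⁻¹ ^ (m + 1) := by
  have head : ∑ n ∈ Finset.range (m + 1), betaOrbit β n / β ^ n ≤ 1 + m * (Int.fract β / β) := by
    have h := Finset.sum_le_card_nsmul (Finset.range m) _ _
      fun n _ ↦ betaOrbit_succ_div_pow_le (zero_lt_one.trans hβ) n
    rw [Finset.card_range, nsmul_eq_mul] at h
    rw [Finset.sum_range_succ', betaOrbit, pow_zero, div_one]
    linarith
  rw [parryMass, ← (summable_betaOrbit_div_pow hβ).sum_add_tsum_nat_add (m + 1)]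
  exact add_le_add head (tsum_betaOrbit_div_pow_nat_add_le hβ (m + 1))

theorem parryMass_le_of_two_le (hβ : 2 ≤ β) (m : ℕ) :
    parryMass β ≤ 1 + m * ((β - 2) / 2) + (1 / 2) ^ m := by
  have fract_le : Int.fract β ≤ β - 2 := by
    have : (2 : ℝ) ≤ ⌊β⌋ := mod_cast Int.le_floor.2 (mod_cast hβ : ((2 : ℤ) : ℝ) ≤ β)
    rw [Int.fract]
    linarith
  have inv_le : β⁻¹ ≤ 1 / 2 := by rw [one_div]; gcongr
  have tail_le : (1 - β⁻¹)⁻¹ ≤ 2 := inv_le_of_inv_le₀ two_pos (by linarith)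
  calc parryMass β ≤ 1 + m * (Int.fract β / β) + (1 - β⁻¹)⁻¹ * β⁻¹ ^ (m + 1) :=
        parryMass_le (by linarith) m
    _ ≤ 1 + m * ((β - 2) / 2) + 2 * (1 / 2) ^ (m + 1) := by gcongr
    _ = 1 + m * ((β - 2) / 2) + (1 / 2) ^ m := by ring

theorem betaOrbit_sq_div_nonneg (hβ : 0 ≤ β) (n : ℕ) : 0 ≤ betaOrbit β n ^ 2 / (2 * β ^ n) := by
  positivity

theorem betaOrbit_sq_div_le (hβ : 0 ≤ β) (n : ℕ) :
    betaOrbit β n ^ 2 / (2 * β ^ n) ≤ betaOrbit β n / β ^ n / 2 := by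
  rw [div_div, mul_comm (β ^ n)]
  gcongr
  exact pow_le_of_le_one (betaOrbit_nonneg β n) (betaOrbit_le_one β n) two_ne_zero

theorem summable_betaOrbit_sq_div (hβ : 1 < β) :
    Summable fun n ↦ betaOrbit β n ^ 2 / (2 * β ^ n) :=
  .of_nonneg_of_le (betaOrbit_sq_div_nonneg (by positivity)) (betaOrbit_sq_div_le (by positivity))
    ((summable_betaOrbit_div_pow hβ).div_const 2)

theorem parryMoment_le_parryMass_div_two (hβ : 1 < β) : parryMoment β ≤ parryMass β / 2 := by
  rw [parryMass, ← tsum_div_const]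
  exact (summable_betaOrbit_sq_div hβ).tsum_le_tsum (betaOrbit_sq_div_le (by positivity))
    ((summable_betaOrbit_div_pow hβ).div_const 2)

theorem one_half_le_parryMoment (hβ : 1 < β) : 1 / 2 ≤ parryMoment β := by
  simpa [parryMoment, betaOrbit] using
    (summable_betaOrbit_sq_div hβ).le_tsum 0 fun n _ ↦ betaOrbit_sq_div_nonneg (by positivity) n

theorem one_div_Ebeta_sub_two_nonneg (hβ : 1 < β) : 0 ≤ 1 / Ebeta β - 2 := by
  have moment_ge := one_half_le_parryMoment hβ
  have moment_le := parryMoment_le_parryMass_div_two hβ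
  rw [Ebeta_eq_parryMoment_div_parryMass, one_div_div, sub_nonneg, le_div_iff₀ (by linarith)]
  linarith

theorem one_div_Ebeta_sub_two_le_parryMass (hβ : 1 < β) :
    1 / Ebeta β - 2 ≤ 2 * (parryMass β - 1) := by
  have moment_ge := one_half_le_parryMoment hβ
  have mass_ge : 0 ≤ parryMass β := tsum_nonneg (betaOrbit_div_pow_nonneg (by positivity))
  have quotient_le : parryMass β / parryMoment β ≤ parryMass β / (1 / 2) := by gcongr
  rw [Ebeta_eq_parryMoment_div_parryMass, one_div_div]
  linarith

theorem one_div_Ebeta_sub_two_le (hβ : 2 ≤ β) (m : ℕ) :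
    1 / Ebeta β - 2 ≤ m * (β - 2) + 2 * (1 / 2) ^ m := by
  have mass_le := parryMass_le_of_two_le hβ m
  have excess_le := one_div_Ebeta_sub_two_le_parryMass (one_lt_two.trans_le hβ)
  linarith

theorem Ebeta_natCast (k : ℕ) : Ebeta k = 1 / 2 := by
  have mass : parryMass k = 1 := by
    rw [parryMass, tsum_eq_zero_add' (by simp [betaOrbit_natCast_succ, summable_zero])]
    simp only [betaOrbit_natCast_succ]
    simp [betaOrbit]
  have moment : parryMoment k = 1 / 2 := by
    rw [parryMoment, tsum_eq_zero_add' (by simp [betaOrbit_natCast_succ, summable_zero])]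
    simp only [betaOrbit_natCast_succ]
    simp [betaOrbit]
  rw [Ebeta_eq_parryMoment_div_parryMass, mass, moment, div_one]

end Parry

section LogGauge

variable {x : ℝ}

/-- The comparison function `x / (1 + log (2 / x))` on `[0, 2]`, equivalent to `x / |log x|` as
`x → 0⁺` but with positive denominator on all of `(0, 2]`; its value at `0` is `0`. -/
noncomputable def logGauge (x : ℝ) : ℝ :=
  x / (1 + Real.log (2 / x))

theorem logGauge_zero : logGauge 0 = 0 :=
  zero_div _

theorem one_add_log_two_div_pos (hx : x ∈ Ioc 0 2) : 0 < 1 + Real.log (2 / x) := by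
  have := Real.log_nonneg ((one_le_div hx.1).2 hx.2)
  positivity

theorem logGauge_pos (hx : x ∈ Ioc 0 2) : 0 < logGauge x :=
  div_pos hx.1 (one_add_log_two_div_pos hx)

theorem logGauge_monotoneOn : MonotoneOn logGauge (Ioc 0 2) := by
  intro x hx y hy hxy
  have hx₀ := hx.1
  have hy₀ := hy.1
  refine div_le_div₀ hy₀.le hxy (one_add_log_two_div_pos hy) ?_
  gcongr

theorem div_abs_log_le_three_mul_logGauge (hx₀ : 0 < x) (hx : x ≤ Real.exp (-1)) :
    x / |Real.log x| ≤ 3 * logGauge x := by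
  have log_le : Real.log x ≤ -1 := (Real.log_le_iff_le_exp hx₀).2 hx
  have hx₂ : x ≤ 2 := by linarith [Real.exp_le_one_iff.2 (neg_nonpos.2 (zero_le_one' ℝ))]
  rw [logGauge, ← mul_div_assoc, abs_of_neg (by linarith),
    div_le_div_iff₀ (by linarith) (one_add_log_two_div_pos ⟨hx₀, hx₂⟩),
    Real.log_div two_ne_zero hx₀.ne']
  nlinarith [Real.log_two_lt_d9]

theorem logGauge_le_of_forall_le_mul_add_pow {δ : ℝ} (hx : 0 ≤ x) (hδ : 0 ≤ δ)
    (h : ∀ m : ℕ, x ≤ m * δ + 2 * (1 / 2) ^ m) : logGauge x ≤ 4 * δ := by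
  obtain rfl | hx₀ := hx.eq_or_lt
  · rw [logGauge_zero]
    positivity
  have hx₂ : x ≤ 2 := by simpa using h 0
  obtain ⟨n, pow_le, lt_pow⟩ :=
    exists_nat_pow_near (show 1 ≤ 4 / x by rw [one_le_div hx₀]; linarith) one_lt_two
  have half_pow_le : (1 / 2 : ℝ) ^ (n + 1) ≤ x / 4 := by
    rw [one_div_pow, ← one_div_div 4 x]
    exact one_div_le_one_div_of_le (by positivity) lt_pow.le
  have n_le : n + 1 ≤ 2 * (1 + Real.log (2 / x)) := by
    have log_le : n * Real.log 2 ≤ Real.log 2 + Real.log (2 / x) := by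
      rw [← Real.log_pow, ← Real.log_mul two_ne_zero (by positivity)]
      exact Real.log_le_log (by positivity) (pow_le.trans_eq (by ring))
    have log_ge : 0 ≤ Real.log (2 / x) := Real.log_nonneg ((one_le_div hx₀).2 hx₂)
    nlinarith [Real.log_two_gt_d9]
  have x_le : x ≤ 2 * (n + 1) * δ := by
    have := h (n + 1)
    push_cast at this
    linarith
  rw [logGauge, div_le_iff₀ (one_add_log_two_div_pos ⟨hx₀, hx₂⟩)]
  calc x ≤ 2 * (n + 1) * δ := x_le
    _ ≤ 2 * (2 * (1 + Real.log (2 / x))) * δ := by gcongr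
    _ = 4 * δ * (1 + Real.log (2 / x)) := by ring

theorem logGauge_one_div_Ebeta_sub_two_le {β : ℝ} (hβ : 2 ≤ β) :
    logGauge (1 / Ebeta β - 2) ≤ 4 * (β - 2) :=
  logGauge_le_of_forall_le_mul_add_pow (one_div_Ebeta_sub_two_nonneg (one_lt_two.trans_le hβ))
    (sub_nonneg.2 hβ) (one_div_Ebeta_sub_two_le hβ)

end LogGauge

section MeanValue

variable {F : ℝ → ℝ} {C : ℝ}

theorem sub_le_mul_div_abs_log_of_deriv_le {x : ℝ} (hx₀ : 0 < x) (hx₁ : x < 1) (hC : 0 ≤ C)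
    (hFc : ContinuousOn F (Icc 0 x)) (hFd : DifferentiableOn ℝ F (Ioo 0 x))
    (hF' : ∀ y ∈ Ioo 0 x, deriv F y ≤ C / |Real.log y|) :
    F x - F 0 ≤ C * (x / |Real.log x|) := by
  have deriv_le : ∀ y ∈ interior (Icc 0 x), deriv F y ≤ C / |Real.log x| := by
    rw [interior_Icc]
    intro y hy
    have log_lt : Real.log y < Real.log x := Real.log_lt_log hy.1 hy.2
    have log_neg : Real.log x < 0 := Real.log_neg hx₀ hx₁
    refine (hF' y hy).trans (div_le_div_of_nonneg_left hC (abs_pos_of_neg log_neg) ?_)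
    rw [abs_of_neg log_neg, abs_of_neg (log_lt.trans log_neg)]
    linarith
  have := (convex_Icc 0 x).image_sub_le_mul_sub_of_deriv_le hFc (by rwa [interior_Icc]) deriv_le
    0 (left_mem_Icc.2 hx₀.le) x (right_mem_Icc.2 hx₀.le) hx₀.le
  rwa [sub_zero, div_mul_eq_mul_div, mul_div_assoc] at this

theorem sub_le_mul_logGauge_of_deriv_le {x : ℝ} (hx₀ : 0 < x) (hx : x ≤ Real.exp (-1))
    (hC : 0 ≤ C) (hFc : ContinuousOn F (Icc 0 x)) (hFd : DifferentiableOn ℝ F (Ioo 0 x))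
    (hF' : ∀ y ∈ Ioo 0 x, deriv F y ≤ C / |Real.log y|) :
    F x - F 0 ≤ 3 * C * logGauge x := by
  have hx₁ : x < 1 := hx.trans_lt (Real.exp_lt_one_iff.2 (neg_lt_zero.2 one_pos))
  calc F x - F 0 ≤ C * (x / |Real.log x|) :=
        sub_le_mul_div_abs_log_of_deriv_le hx₀ hx₁ hC hFc hFd hF'
    _ ≤ C * (3 * logGauge x) := by
      gcongr
      exact div_abs_log_le_three_mul_logGauge hx₀ hx
    _ = 3 * C * logGauge x := by ring

theorem exists_le_mul_logGauge_of_deriv_le {r : ℝ} (hFc : ContinuousOn F (Icc 0 2)) (hF0 : F 0 = 0)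
    (hr : 0 < r) (hC : 0 ≤ C) (hFd : DifferentiableOn ℝ F (Ioo 0 r))
    (hF' : ∀ x ∈ Ioo 0 r, deriv F x ≤ C / |Real.log x|) :
    ∃ K > 0, ∀ x ∈ Icc 0 2, F x ≤ K * logGauge x := by
  obtain ⟨M, hM⟩ := isCompact_Icc.exists_bound_of_continuousOn hFc
  set s := min r (Real.exp (-1))
  have s_lt_one : s < 1 :=
    (min_le_right _ _).trans_lt (Real.exp_lt_one_iff.2 (neg_lt_zero.2 one_pos))
  have hs : s ∈ Ioc 0 2 := ⟨lt_min hr (Real.exp_pos _), by linarith⟩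
  have near_zero : ∀ x ∈ Ioo 0 s, F x ≤ 3 * C * logGauge x := by
    rintro x ⟨hx₀, hxs⟩
    have hxr : x < r := hxs.trans_le (min_le_left _ _)
    have := sub_le_mul_logGauge_of_deriv_le hx₀ (hxs.le.trans (min_le_right _ _)) hC
      (hFc.mono (Icc_subset_Icc_right (hxs.le.trans hs.2)))
      (hFd.mono (Ioo_subset_Ioo_right hxr.le)) fun y hy ↦ hF' y ⟨hy.1, hy.2.trans hxr⟩
    rwa [hF0, sub_zero] at this
  have away_from_zero : ∀ x ∈ Icc s 2, F x ≤ M / logGauge s * logGauge x := by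
    rintro x ⟨hsx, hx₂⟩
    have F_le : ‖F x‖ ≤ M := hM x ⟨hs.1.le.trans hsx, hx₂⟩
    have hM₀ : 0 ≤ M := (norm_nonneg _).trans F_le
    have gauge_pos := logGauge_pos hs
    calc F x ≤ M := (Real.le_norm_self _).trans F_le
      _ = M / logGauge s * logGauge s := (div_mul_cancel₀ M gauge_pos.ne').symm
      _ ≤ M / logGauge s * logGauge x := by
        gcongr
        exact logGauge_monotoneOn hs ⟨hs.1.trans_le hsx, hx₂⟩ hsx
  refine ⟨max (3 * C) (M / logGauge s) + 1, by positivity, ?_⟩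
  rintro x ⟨hx₀, hx₂⟩
  obtain rfl | hx₀ := hx₀.eq_or_lt
  · rw [hF0, logGauge_zero, mul_zero]
  have gauge_pos := logGauge_pos ⟨hx₀, hx₂⟩
  obtain hxs | hsx := lt_or_ge x s
  · refine (near_zero x ⟨hx₀, hxs⟩).trans ?_
    gcongr
    linarith [le_max_left (3 * C) (M / logGauge s)]
  · refine (away_from_zero x ⟨hsx, hx₂⟩).trans ?_
    gcongr
    linarith [le_max_right (3 * C) (M / logGauge s)]

end MeanValue

theorem psi_two {F : ℝ → ℝ} (hF0 : F 0 = 0) (ε : ℝ) : psi ε F 2 = 2 := by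
  have h : Ebeta 2 = 1 / 2 := mod_cast Ebeta_natCast 2
  rw [psi, h, one_div_one_div, sub_self, hF0, mul_zero, add_zero]

theorem stmt10_general (F : ℝ → ℝ) (hFc : ContinuousOn F (Icc 0 2))
    (hFd : DifferentiableOn ℝ F (Ioo 0 1)) (hF0 : F 0 = 0)
    (hF' : ∃ C > (0 : ℝ), ∃ x₀ ∈ Ioo (0 : ℝ) 1, ∀ x : ℝ, 0 < x → x < x₀ →
      |deriv F x| ≤ C / |Real.log x|) :
    ∃ ε₁ > (0 : ℝ), ∀ ε : ℝ, 0 ≤ ε → ε < ε₁ →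
      (∀ β : ℝ, 2 < β → psi ε F β < β) ∧
      (∀ β : ℝ, 2 ≤ β → (psi ε F β = β ↔ β = 2)) := by
  obtain ⟨C, hC, r, hr, hF'⟩ := hF'
  obtain ⟨K, hK, F_le⟩ := exists_le_mul_logGauge_of_deriv_le hFc hF0 hr.1 hC.le
    (hFd.mono (Ioo_subset_Ioo_right hr.2.le)) fun x hx ↦ (le_abs_self _).trans (hF' x hx.1 hx.2)
  have F_le_linear : ∀ β, 2 ≤ β → F (1 / Ebeta β - 2) ≤ K * (4 * (β - 2)) := fun β hβ ↦
    (F_le _ ⟨one_div_Ebeta_sub_two_nonneg (one_lt_two.trans_le hβ),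
      by simpa using one_div_Ebeta_sub_two_le hβ 0⟩).trans
      (mul_le_mul_of_nonneg_left (logGauge_one_div_Ebeta_sub_two_le hβ) hK.le)
  refine ⟨1 / (4 * K), by positivity, fun ε hε₀ hε ↦ ?_⟩
  have psi_lt : ∀ β, 2 < β → psi ε F β < β := by
    intro β hβ
    rw [lt_div_iff₀ (by positivity)] at hε
    calc psi ε F β ≤ 2 + ε * (K * (4 * (β - 2))) := by rw [psi]; gcongr; exact F_le_linear β hβ.le
      _ = 2 + ε * (4 * K) * (β - 2) := by ring
      _ < 2 + 1 * (β - 2) := by gcongr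
      _ = β := by ring
  refine ⟨psi_lt, fun β hβ ↦ ⟨fun fixed ↦ ?_, ?_⟩⟩
  · by_contra hne
    exact (psi_lt β (hβ.lt_of_ne' hne)).ne fixed
  · rintro rfl
    exact psi_two hF0 ε

/-- For weak self-consistency, `ψ^ε(β) < β` for all `β > 2`; in particular `β = 2`
is the unique fixed point of `ψ^ε` on `[2,∞)`. -/
theorem stmt10 (F : ℝ → ℝ) (hF : ContDiff ℝ 1 F) (hF0 : F 0 = 0)
    (hFpos : ∀ x : ℝ, x ≠ 0 → 0 < F x)
    (hF' : ∃ C > (0:ℝ), ∃ x₀ ∈ Set.Ioo (0:ℝ) 1, ∀ x : ℝ, 0 < x → x < x₀ →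
      |deriv F x| ≤ C / |Real.log x|) :
    ∃ ε₁ > (0:ℝ), ∀ ε : ℝ, 0 ≤ ε → ε < ε₁ →
      (∀ β : ℝ, 2 < β → psi ε F β < β) ∧
      (∀ β : ℝ, 2 ≤ β → (psi ε F β = β ↔ β = 2)) :=
  stmt10_general F hF.continuous.continuousOn (hF.differentiable one_ne_zero).differentiableOn
    hF0 hF'
end

section
/- Take F(x) = x, so ψ^ε(β) = 2 + ε(1/E(β) − 2). For every ε > 0 there exists β* with 2 < β* < 3 such that ψ^ε(β*) = β*. -/
/-!
If `β tₙ(β)` is an integer for some `n`, each `tₘ` with `m > n` may jump at `β`, but `E` does not.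
Let `p` be the first such index plus one. The orbit of `1` then ends with `t_p = 0`, whereas its
limit from the left has `p`-th term `1` and is therefore `p`-periodic. Cutting a `p`-periodic
sequence off at `p` multiplies its discounted sum by `1 - β⁻ᵖ`, and this factor cancels between the
numerator and the denominator of `E`. So `E` is continuous on `(1, ∞)`, with `E(k) = 1/2` at
integers `k`.

Just above an integer `k ≥ 2`, the orbit `tₙ₊₁ = βⁿ (β - k)` stays below `1/2` for `m` steps, `m → ∞`,
and each of these adds a multiple of `β - k` to `∑ tₙ (1 - tₙ) / βⁿ`, to which `1/E - 2` is
comparable. Hence `1/E` has infinite right derivative at `k`. For `k = 2` this gives `β < ψ^ε(β)`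
close to `2` however small `ε` is, while `ψ^ε(3) = 2 < 3`; the intermediate value theorem finishes.
-/

open Filter Function Set Topology

/-- The sum `∑ aₙ / βⁿ`, through which both the numerator and the denominator of `Ebeta` are
expressed. -/
noncomputable def discountedSum (β : ℝ) (a : ℕ → ℝ) : ℝ :=
  ∑' n, a n / β ^ n

/-- The quasi-greedy orbit of `1` under the β-map: `β x` is reduced modulo `1` to `(0, 1]` instead
of `[0, 1)`. It is the limit of `betaOrbit b` as `b` increases to `β`. -/
noncomputable def quasiGreedyOrbit (β : ℝ) : ℕ → ℝ
  | 0 => 1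
  | n + 1 => β * quasiGreedyOrbit β n + 1 - ⌈β * quasiGreedyOrbit β n⌉

section DiscountedSum

variable {a b : ℕ → ℝ} {β C : ℝ}

lemma summable_div_pow_of_abs_le (hβ : 1 < β) (ha : ∀ n, |a n| ≤ C) :
    Summable fun n => a n / β ^ n := by
  have hgeom : Summable fun n => C * β⁻¹ ^ n :=
    (summable_geometric_of_lt_one (by positivity) (inv_lt_one_of_one_lt₀ hβ)).mul_left C
  refine hgeom.of_norm_bounded fun n => ?_
  rw [Real.norm_eq_abs, abs_div, abs_of_pos (a := β ^ n) (by positivity), inv_pow,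
    ← div_eq_mul_inv]
  gcongr
  exact ha n

lemma discountedSum_one (hβ : 1 < β) : discountedSum β 1 = β / (β - 1) := by
  simp only [discountedSum, Pi.one_apply, one_div, ← inv_pow]
  rw [tsum_geometric_of_lt_one (by positivity) (inv_lt_one_of_one_lt₀ hβ)]
  have : β - 1 ≠ 0 := by linarith
  field_simp

lemma discountedSum_le_of_le_one (hβ : 1 < β) (ha : Summable fun n => a n / β ^ n)
    (hle : ∀ n, a n ≤ 1) : discountedSum β a ≤ β / (β - 1) := by
  rw [← discountedSum_one hβ]
  refine ha.tsum_le_tsum (fun n => ?_) (summable_div_pow_of_abs_le (C := 1) hβ (by simp))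
  gcongr
  exact hle n

lemma discountedSum_eq_apply_zero (ha : ∀ n, a (n + 1) = 0) : discountedSum β a = a 0 := by
  rw [discountedSum, tsum_eq_single 0]
  · simp
  · rintro (_ | n) hn
    · contradiction
    · simp [ha]

lemma tendsto_discountedSum {ι : Type*} {l : Filter ι} {x : ι → ℝ} {f : ι → ℕ → ℝ}
    (hβ : 1 < β) (hx : Tendsto x l (𝓝 β)) (hf : ∀ n, Tendsto (f · n) l (𝓝 (a n)))
    (hC : ∀ i n, |f i n| ≤ C) :
    Tendsto (fun i => discountedSum (x i) (f i)) l (𝓝 (discountedSum β a)) := by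
  obtain ⟨r, hr, hrβ⟩ := exists_between hβ
  refine tendsto_tsum_of_dominated_convergence (bound := fun n => C / r ^ n)
    (summable_div_pow_of_abs_le hr fun _ => le_rfl)
    (fun n => (hf n).div (hx.pow n) (by positivity)) ?_
  filter_upwards [hx.eventually (lt_mem_nhds hrβ)] with i hi n
  have hC₀ : 0 ≤ C := (abs_nonneg _).trans (hC i n)
  have hxi : 0 < x i := by linarith
  rw [Real.norm_eq_abs, abs_div, abs_of_pos (a := x i ^ n) (by positivity)]
  gcongr
  exact hC i n

lemma discountedSum_eq_of_truncation {p : ℕ} (hb : Summable fun n => b n / β ^ n)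
    (hper : Periodic b p) (hlt : ∀ n < p, a n = b n) (hzero : ∀ n, a (n + p) = 0) :
    discountedSum β a = (1 - 1 / β ^ p) * discountedSum β b := by
  have hhead : discountedSum β a = ∑ n ∈ Finset.range p, b n / β ^ n := by
    rw [discountedSum, tsum_eq_sum (s := Finset.range p)]
    · exact Finset.sum_congr rfl fun n hn => by rw [hlt n (Finset.mem_range.1 hn)]
    · intro n hn
      obtain ⟨m, rfl⟩ := Nat.exists_eq_add_of_le' (not_lt.1 (mt Finset.mem_range.2 hn))
      simp [hzero]
  have htail : ∑' n, b (n + p) / β ^ (n + p) = 1 / β ^ p * discountedSum β b := by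
    rw [discountedSum, ← tsum_mul_left]
    refine tsum_congr fun n => ?_
    rw [hper, pow_add]
    ring
  have hsplit : ∑ n ∈ Finset.range p, b n / β ^ n + ∑' n, b (n + p) / β ^ (n + p) =
      discountedSum β b := hb.sum_add_tsum_nat_add p
  linarith

end DiscountedSum

section FractLimits

lemma tendsto_fract_nhdsGE (x : ℝ) : Tendsto Int.fract (𝓝[≥] x) (𝓝[≥] Int.fract x) := by
  have hsub : Tendsto (fun y => y - (⌊x⌋ : ℝ)) (𝓝[≥] x) (𝓝[≥] Int.fract x) :=
    ((continuous_sub_right (⌊x⌋ : ℝ)).tendsto x).inf <|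
      tendsto_principal_principal.2 fun _ hy => sub_le_sub_right (mem_Ici.1 hy) _
  refine hsub.congr' ?_
  filter_upwards [tendsto_pure.1 (tendsto_floor_right_pure_floor x)] with y hy
  rw [Int.fract, hy]

lemma tendsto_fract_nhdsLT (x : ℝ) : Tendsto Int.fract (𝓝[<] x) (𝓝[<] (x + 1 - ⌈x⌉)) := by
  have hsub : Tendsto (fun y => y + 1 - (⌈x⌉ : ℝ)) (𝓝[<] x) (𝓝[<] (x + 1 - ⌈x⌉)) :=
    (((continuous_add_const 1).sub continuous_const).tendsto x).inf <|
      tendsto_principal_principal.2 fun _ hy =>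
        sub_lt_sub_right (add_lt_add_left (mem_Iio.1 hy) 1) _
  refine hsub.congr' ?_
  filter_upwards [tendsto_pure.1 (tendsto_floor_left_pure_ceil_sub_one x)] with y hy
  rw [Int.fract, hy]
  push_cast
  ring

end FractLimits

section Orbits

variable {β : ℝ}

lemma betaOrbit_mem_Icc (β : ℝ) (n : ℕ) : betaOrbit β n ∈ Icc 0 1 := by
  cases n with
  | zero => simp [betaOrbit]
  | succ n => exact ⟨Int.fract_nonneg _, (Int.fract_lt_one _).le⟩

lemma quasiGreedyOrbit_mem_Ioc (β : ℝ) (n : ℕ) : quasiGreedyOrbit β n ∈ Ioc 0 1 := by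
  cases n with
  | zero => simp [quasiGreedyOrbit]
  | succ n =>
    constructor <;> rw [quasiGreedyOrbit]
    · linarith [Int.ceil_lt_add_one (β * quasiGreedyOrbit β n)]
    · linarith [Int.le_ceil (β * quasiGreedyOrbit β n)]

lemma tendsto_betaOrbit_nhdsGT (hβ : 0 ≤ β) (n : ℕ) :
    Tendsto (betaOrbit · n) (𝓝[>] β) (𝓝[≥] betaOrbit β n) := by
  induction n with
  | zero => exact tendsto_const_nhdsWithin self_mem_Ici
  | succ n ih =>
    obtain ⟨hlim, hge⟩ := tendsto_nhdsWithin_iff.1 ih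
    refine (tendsto_fract_nhdsGE _).comp (tendsto_nhdsWithin_iff.2
      ⟨(tendsto_id.mono_left nhdsWithin_le_nhds).mul hlim, ?_⟩)
    filter_upwards [hge, self_mem_nhdsWithin] with b hb hβb
    exact mul_le_mul (le_of_lt hβb) hb (betaOrbit_mem_Icc β n).1 (hβ.trans (le_of_lt hβb))

lemma tendsto_betaOrbit_nhdsLT (hβ : 0 < β) (n : ℕ) :
    Tendsto (betaOrbit · n) (𝓝[<] β) (𝓝[≤] quasiGreedyOrbit β n) := by
  induction n with
  | zero => exact tendsto_const_nhdsWithin self_mem_Iic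
  | succ n ih =>
    obtain ⟨hlim, hle⟩ := tendsto_nhdsWithin_iff.1 ih
    have hpos : 0 < quasiGreedyOrbit β n := (quasiGreedyOrbit_mem_Ioc β n).1
    refine ((tendsto_fract_nhdsLT _).comp (tendsto_nhdsWithin_iff.2
      ⟨(tendsto_id.mono_left nhdsWithin_le_nhds).mul hlim, ?_⟩)).mono_right
        (nhdsWithin_mono _ Iio_subset_Iic_self)
    filter_upwards [hle, hlim.eventually (lt_mem_nhds hpos), self_mem_nhdsWithin]
      with b hb hb₀ hbβ
    exact mul_lt_mul hbβ hb hb₀ hβ.le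

lemma betaOrbit_add_eq_zero {p : ℕ} (hp : betaOrbit β p = 0) (n : ℕ) :
    betaOrbit β (n + p) = 0 := by
  induction n with
  | zero => rwa [zero_add]
  | succ n ih => rw [Nat.succ_add, betaOrbit, ih, mul_zero, Int.fract_zero]

lemma periodic_quasiGreedyOrbit {p : ℕ} (hp : quasiGreedyOrbit β p = 1) :
    Periodic (quasiGreedyOrbit β) p := by
  intro n
  induction n with
  | zero => rwa [zero_add]
  | succ n ih => rw [Nat.succ_add, quasiGreedyOrbit, ih, quasiGreedyOrbit]

lemma betaOrbit_succ_eq_or {n : ℕ} (h : betaOrbit β n = quasiGreedyOrbit β n) :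
    betaOrbit β (n + 1) = quasiGreedyOrbit β (n + 1) ∨
      betaOrbit β (n + 1) = 0 ∧ quasiGreedyOrbit β (n + 1) = 1 := by
  rw [betaOrbit, quasiGreedyOrbit, h]
  set x := β * quasiGreedyOrbit β n
  by_cases hx : Int.fract x = 0
  · obtain ⟨k, hk⟩ := Int.fract_eq_zero_iff.1 hx
    exact Or.inr ⟨hx, by simp [← hk]⟩
  · exact Or.inl ((Int.fract_eq_zero_or_add_one_sub_ceil x).resolve_left hx)

lemma betaOrbit_eq_quasiGreedyOrbit_or_truncation (β : ℝ) :
    betaOrbit β = quasiGreedyOrbit β ∨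
      ∃ p ≠ 0, (∀ n < p, betaOrbit β n = quasiGreedyOrbit β n) ∧
        betaOrbit β p = 0 ∧ quasiGreedyOrbit β p = 1 := by
  classical
  refine or_iff_not_imp_left.2 fun hne => ?_
  have hdiff : ∃ n, betaOrbit β n ≠ quasiGreedyOrbit β n := Function.ne_iff.1 hne
  obtain ⟨p, hp, hlt⟩ : ∃ p, betaOrbit β p ≠ quasiGreedyOrbit β p ∧
      ∀ n < p, betaOrbit β n = quasiGreedyOrbit β n :=
    ⟨Nat.find hdiff, Nat.find_spec hdiff, fun n hn => not_not.1 (Nat.find_min hdiff hn)⟩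
  cases p with
  | zero => exact absurd rfl hp
  | succ q =>
    exact ⟨q + 1, q.succ_ne_zero, hlt,
      (betaOrbit_succ_eq_or (hlt q q.lt_succ_self)).resolve_left hp⟩

lemma betaOrbit_intCast_succ (k : ℤ) (n : ℕ) : betaOrbit k (n + 1) = 0 := by
  have h₁ : betaOrbit k 1 = 0 := by simp [betaOrbit]
  exact betaOrbit_add_eq_zero h₁ n

lemma betaOrbit_succ_eq_pow_mul_fract {n : ℕ} (hβ : 1 ≤ β) (hn : β ^ n * Int.fract β < 1) :
    betaOrbit β (n + 1) = β ^ n * Int.fract β := by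
  induction n with
  | zero => simp [betaOrbit]
  | succ n ih =>
    have := Int.fract_nonneg β
    have hprev : β ^ n * Int.fract β < 1 := lt_of_le_of_lt (by gcongr; omega) hn
    rw [betaOrbit, ih hprev, ← mul_assoc, ← pow_succ']
    exact Int.fract_eq_self.2 ⟨by positivity, hn⟩

end Orbits

section Expectation

variable {β : ℝ}

lemma abs_pow_le_one_of_mem_Icc {x : ℝ} (hx : x ∈ Icc 0 1) (k : ℕ) : |x ^ k| ≤ 1 := by
  rw [abs_of_nonneg (pow_nonneg hx.1 k)]
  exact pow_le_one₀ hx.1 hx.2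

lemma summable_betaOrbit_pow (hβ : 1 < β) (k : ℕ) :
    Summable fun n => (betaOrbit β ^ k) n / β ^ n :=
  summable_div_pow_of_abs_le hβ fun n => abs_pow_le_one_of_mem_Icc (betaOrbit_mem_Icc β n) k

lemma discountedSum_betaOrbit_pow_pos (hβ : 1 < β) (k : ℕ) :
    0 < discountedSum β (betaOrbit β ^ k) := by
  refine (summable_betaOrbit_pow hβ k).tsum_pos (fun n => ?_) 0 (by simp [betaOrbit])
  have := (betaOrbit_mem_Icc β n).1
  simp only [Pi.pow_apply]
  positivity

lemma discountedSum_betaOrbit_pos (hβ : 1 < β) : 0 < discountedSum β (betaOrbit β) := by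
  simpa only [pow_one] using discountedSum_betaOrbit_pow_pos hβ 1

lemma exists_discountedSum_betaOrbit_pow_eq_mul (hβ : 1 < β) :
    ∃ c : ℝ, c ≠ 0 ∧ ∀ k ≠ 0, discountedSum β (betaOrbit β ^ k) =
      c * discountedSum β (quasiGreedyOrbit β ^ k) := by
  obtain heq | ⟨p, hp, hlt, hzero, hone⟩ := betaOrbit_eq_quasiGreedyOrbit_or_truncation β
  · exact ⟨1, one_ne_zero, fun k _ => by rw [heq, one_mul]⟩
  · refine ⟨1 - 1 / β ^ p, ?_, fun k hk => discountedSum_eq_of_truncation ?_ ?_ ?_ ?_⟩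
    · have hpow : 1 < β ^ p := one_lt_pow₀ hβ hp
      exact (sub_pos.2 ((div_lt_one (by positivity)).2 hpow)).ne'
    · exact summable_div_pow_of_abs_le hβ fun n =>
        abs_pow_le_one_of_mem_Icc (Ioc_subset_Icc_self (quasiGreedyOrbit_mem_Ioc β n)) k
    · exact (periodic_quasiGreedyOrbit hone).comp (· ^ k)
    · exact fun n hn => by rw [Pi.pow_apply, Pi.pow_apply, hlt n hn]
    · exact fun n => by rw [Pi.pow_apply, betaOrbit_add_eq_zero hzero, zero_pow hk]

lemma Ebeta_eq_discountedSum_div (β : ℝ) :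
    Ebeta β = discountedSum β (betaOrbit β ^ 2) / (2 * discountedSum β (betaOrbit β)) := by
  have hnum : ∑' n, betaOrbit β n ^ 2 / (2 * β ^ n) = discountedSum β (betaOrbit β ^ 2) / 2 := by
    rw [discountedSum, ← tsum_div_const]
    exact tsum_congr fun n => by rw [Pi.pow_apply, div_div, mul_comm]
  rw [Ebeta, hnum, div_div]
  rfl

lemma Ebeta_pos (hβ : 1 < β) : 0 < Ebeta β := by
  rw [Ebeta_eq_discountedSum_div]
  exact div_pos (discountedSum_betaOrbit_pow_pos hβ 2)
    (mul_pos two_pos (discountedSum_betaOrbit_pos hβ))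

lemma Ebeta_intCast (k : ℤ) : Ebeta k = 1 / 2 := by
  rw [Ebeta_eq_discountedSum_div,
    discountedSum_eq_apply_zero fun n => by simp [betaOrbit_intCast_succ],
    discountedSum_eq_apply_zero (betaOrbit_intCast_succ k)]
  simp [betaOrbit]

lemma tendsto_Ebeta {l : Filter ℝ} {u : ℕ → ℝ} (hβ : 1 < β) (hl : l ≤ 𝓝 β)
    (hu : ∀ n, Tendsto (betaOrbit · n) l (𝓝 (u n))) (hne : discountedSum β u ≠ 0) :
    Tendsto Ebeta l (𝓝 (discountedSum β (u ^ 2) / (2 * discountedSum β u))) := by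
  have hnum := tendsto_discountedSum (f := fun b => betaOrbit b ^ 2) (a := u ^ 2) hβ
    (tendsto_id.mono_left hl) (fun n => (hu n).pow 2)
    (fun b n => abs_pow_le_one_of_mem_Icc (betaOrbit_mem_Icc b n) 2)
  have hden := tendsto_discountedSum hβ (tendsto_id.mono_left hl) hu
    (fun b n => by simpa using abs_pow_le_one_of_mem_Icc (betaOrbit_mem_Icc b n) 1)
  exact (hnum.div (hden.const_mul 2) (by simpa using hne)).congr fun b =>
    (Ebeta_eq_discountedSum_div b).symm

lemma Ebeta_eq_quasiGreedyOrbit (hβ : 1 < β) :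
    Ebeta β = discountedSum β (quasiGreedyOrbit β ^ 2) /
      (2 * discountedSum β (quasiGreedyOrbit β)) := by
  obtain ⟨c, hc, hmul⟩ := exists_discountedSum_betaOrbit_pow_eq_mul hβ
  have hlin := hmul 1 one_ne_zero
  simp only [pow_one] at hlin
  rw [Ebeta_eq_discountedSum_div, hmul 2 two_ne_zero, hlin, mul_left_comm, mul_div_mul_left _ _ hc]

lemma discountedSum_quasiGreedyOrbit_ne_zero (hβ : 1 < β) :
    discountedSum β (quasiGreedyOrbit β) ≠ 0 := by
  intro hzero
  apply (Ebeta_pos hβ).ne'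
  rw [Ebeta_eq_quasiGreedyOrbit hβ, hzero, mul_zero, div_zero]

lemma continuousAt_Ebeta (hβ : 1 < β) : ContinuousAt Ebeta β := by
  refine continuousAt_iff_continuous_left'_right'.2 ⟨?_, ?_⟩
  · rw [ContinuousWithinAt, Ebeta_eq_quasiGreedyOrbit hβ]
    exact tendsto_Ebeta hβ nhdsWithin_le_nhds
      (fun n => (tendsto_betaOrbit_nhdsLT (by linarith) n).mono_right nhdsWithin_le_nhds)
      (discountedSum_quasiGreedyOrbit_ne_zero hβ)
  · rw [ContinuousWithinAt, Ebeta_eq_discountedSum_div β]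
    exact tendsto_Ebeta hβ nhdsWithin_le_nhds
      (fun n => (tendsto_betaOrbit_nhdsGT (by linarith) n).mono_right nhdsWithin_le_nhds)
      (discountedSum_betaOrbit_pos hβ).ne'

end Expectation

section SlopeAtIntegers

variable {β : ℝ} {m : ℕ}

lemma mul_fract_le_discountedSum_sub (hβ : 1 < β) (hm : β ^ m * Int.fract β ≤ 1 / 2) :
    m * (Int.fract β / (2 * β)) ≤
      discountedSum β (betaOrbit β) - discountedSum β (betaOrbit β ^ 2) := by
  have hs₁ : Summable fun n => betaOrbit β n / β ^ n := by
    simpa only [pow_one] using summable_betaOrbit_pow hβ 1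
  have hs₂ := summable_betaOrbit_pow hβ 2
  set d : ℕ → ℝ := fun n => betaOrbit β n / β ^ n - (betaOrbit β ^ 2) n / β ^ n
  have hd (n : ℕ) : d n = betaOrbit β n * (1 - betaOrbit β n) / β ^ n := by
    simp only [d, Pi.pow_apply]
    ring
  have hd_nonneg (n : ℕ) : 0 ≤ d n := by
    obtain ⟨h₀, h₁⟩ := betaOrbit_mem_Icc β n
    rw [hd]
    exact div_nonneg (mul_nonneg h₀ (sub_nonneg.2 h₁)) (by positivity)
  have hd_succ : ∀ n ∈ Finset.range m, Int.fract β / (2 * β) ≤ d (n + 1) := by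
    intro n hn
    have := Int.fract_nonneg β
    have hhalf : β ^ n * Int.fract β ≤ 1 / 2 :=
      le_trans (by gcongr; exacts [hβ.le, (Finset.mem_range.1 hn).le]) hm
    calc Int.fract β / (2 * β) = Int.fract β * (1 - 1 / 2) / β := by ring
      _ ≤ Int.fract β * (1 - β ^ n * Int.fract β) / β := by gcongr
      _ = d (n + 1) := by
        rw [hd, betaOrbit_succ_eq_pow_mul_fract hβ.le (by linarith)]
        field_simp
        ring
  calc m * (Int.fract β / (2 * β)) ≤ ∑ n ∈ Finset.range m, d (n + 1) := by
        simpa using Finset.card_nsmul_le_sum _ _ _ hd_succ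
    _ ≤ ∑ n ∈ Finset.range (m + 1), d n := by
        rw [Finset.sum_range_succ']
        exact le_add_of_nonneg_right (hd_nonneg 0)
    _ ≤ ∑' n, d n := (hs₁.sub hs₂).sum_le_tsum _ fun n _ => hd_nonneg n
    _ = _ := hs₁.tsum_sub hs₂

lemma mul_fract_le_one_div_Ebeta_sub_two (hβ : 1 < β) (hm : β ^ m * Int.fract β ≤ 1 / 2) :
    m * ((β - 1) / β ^ 2) * Int.fract β ≤ 1 / Ebeta β - 2 := by
  have := Int.fract_nonneg β
  have hβ₁ : 0 < β - 1 := sub_pos.2 hβ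
  have hpos := discountedSum_betaOrbit_pow_pos hβ 2
  have hle : discountedSum β (betaOrbit β ^ 2) ≤ β / (β - 1) :=
    discountedSum_le_of_le_one hβ (summable_betaOrbit_pow hβ 2) fun n =>
      pow_le_one₀ (betaOrbit_mem_Icc β n).1 (betaOrbit_mem_Icc β n).2
  calc m * ((β - 1) / β ^ 2) * Int.fract β
      = 2 * (m * (Int.fract β / (2 * β))) / (β / (β - 1)) := by field_simp
    _ ≤ 2 * (m * (Int.fract β / (2 * β))) / discountedSum β (betaOrbit β ^ 2) := by gcongr
    _ ≤ 2 * (discountedSum β (betaOrbit β) - discountedSum β (betaOrbit β ^ 2)) /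
          discountedSum β (betaOrbit β ^ 2) := by
        gcongr
        exact mul_fract_le_discountedSum_sub hβ hm
    _ = 1 / Ebeta β - 2 := by
        rw [Ebeta_eq_discountedSum_div]
        field_simp

lemma tendsto_one_div_Ebeta_sub_two_div_atTop {k : ℤ} (hk : 1 < k) :
    Tendsto (fun β => (1 / Ebeta β - 2) / (β - k)) (𝓝[>] (k : ℝ)) atTop := by
  have hk' : (1 : ℝ) < k := mod_cast hk
  refine tendsto_atTop.2 fun C => ?_
  obtain ⟨m, hm⟩ : ∃ m : ℕ, C < m * (((k : ℝ) - 1) / k ^ 2) := by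
    obtain ⟨m, hm⟩ := exists_nat_gt (C / (((k : ℝ) - 1) / k ^ 2))
    exact ⟨m, (div_lt_iff₀ (div_pos (sub_pos.2 hk') (by positivity))).1 hm⟩
  have hsmall : ∀ᶠ β : ℝ in 𝓝 k, β ^ m * (β - k) < 1 / 2 :=
    ContinuousAt.eventually_lt (by fun_prop) continuousAt_const (by simp)
  have hslope : ∀ᶠ β : ℝ in 𝓝 k, C < m * ((β - 1) / β ^ 2) :=
    continuousAt_const.eventually_lt (by fun_prop (disch := positivity)) hm
  filter_upwards [nhdsWithin_le_nhds hsmall, nhdsWithin_le_nhds hslope,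
    Ioo_mem_nhdsGT (lt_add_one (k : ℝ))] with β hβsmall hβslope ⟨hkβ, hβk⟩
  have hfract : Int.fract β = β - k := by
    rw [Int.fract, Int.floor_eq_iff.2 ⟨hkβ.le, hβk⟩]
  rw [le_div_iff₀ (sub_pos.2 hkβ), ← hfract]
  calc C * Int.fract β ≤ m * ((β - 1) / β ^ 2) * Int.fract β := by
        gcongr
    _ ≤ 1 / Ebeta β - 2 :=
        mul_fract_le_one_div_Ebeta_sub_two (hk'.trans hkβ) (hfract ▸ hβsmall.le)

end SlopeAtIntegers

lemma psi_intCast (ε : ℝ) (F : ℝ → ℝ) (k : ℤ) : psi ε F k = 2 + ε * F 0 := by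
  simp [psi, Ebeta_intCast]

lemma continuousOn_psi (ε : ℝ) {F : ℝ → ℝ} (hF : Continuous F) :
    ContinuousOn (psi ε F) (Ioi 1) := by
  intro β hβ
  have hE : ContinuousAt (fun b => 1 / Ebeta b - 2) β :=
    (continuousAt_const.div (continuousAt_Ebeta hβ) (Ebeta_pos hβ).ne').sub continuousAt_const
  exact ((hF.continuousAt.comp hE).const_mul ε).const_add 2 |>.continuousWithinAt

lemma eventually_lt_psi_id {ε : ℝ} (hε : 0 < ε) : ∀ᶠ β in 𝓝[>] 2, β < psi ε id β := by
  have hslope := tendsto_one_div_Ebeta_sub_two_div_atTop (k := 2) one_lt_two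
  rw [Int.cast_ofNat] at hslope
  filter_upwards [hslope.eventually_gt_atTop (1 / ε), self_mem_nhdsWithin] with β hβ h2β
  rw [div_lt_div_iff₀ hε (sub_pos.2 h2β)] at hβ
  rw [psi, id]
  linarith

/-- For `F = id` and every `ε > 0`, `ψ^ε` has a fixed point in `(2,3)`. -/
theorem stmt16 (ε : ℝ) (hε : 0 < ε) :
    ∃ β : ℝ, 2 < β ∧ β < 3 ∧ psi ε id β = β := by
  obtain ⟨b, hb, h2b, hb3⟩ :=
    ((eventually_lt_psi_id hε).and (Ioo_mem_nhdsGT (by norm_num : (2 : ℝ) < 3))).exists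
  have hpsi3 : psi ε id 3 = 2 := by simpa using psi_intCast ε id 3
  have hcont : ContinuousOn (psi ε id) (Icc b 3) :=
    (continuousOn_psi ε continuous_id).mono fun x hx => by
      have := hx.1
      exact mem_Ioi.2 (by linarith)
  obtain ⟨β, ⟨hbβ, hβ3⟩, hfix⟩ :=
    exists_mem_Icc_isFixedPt hcont hb3.le hb.le (by rw [hpsi3]; norm_num)
  refine ⟨β, h2b.trans_le hbβ, hβ3.lt_of_ne ?_, hfix⟩
  rintro rfl
  have : psi ε id 3 = 3 := hfix
  linarith
end
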